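/- Fix δ₀, ρ₀ ∈ (0,1), set α₀ = (1−ρ₀)(1−δ₀)²/ρ₀ and β₀ = (1−ρ₀)(1−δ₀)/ρ₀, and for n ≥ 3 define t_n = δ₀√(2(1−ρ₀)log n) and ψ_n(s) = φ(s) · Φ((t_n − √ρ₀ s)/√(1−ρ₀))^n. Then there is a constant C > 0 depending only on (δ₀, ρ₀) such that for all sufficiently large n, ∫_{0}^{∞} ψ_n(s) ds ≤ C · n^{−α₀} · (log n)^{(β₀−1)/2}. -/

import Mathlib

open MeasureTheory Real Filter

/-- The standard normal density `φ`. -/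
noncomputable def stdNormalPDF (s : ℝ) : ℝ :=
  (Real.sqrt (2 * Real.pi))⁻¹ * Real.exp (-s ^ 2 / 2)

/-- The standard normal distribution function `Φ`. -/
noncomputable def stdNormalCDF (x : ℝ) : ℝ :=
  ∫ s in Set.Iic x, stdNormalPDF s

/-- `t_n = δ₀ √(2(1−ρ₀) log n)`. -/
noncomputable def tN (δ₀ ρ₀ : ℝ) (n : ℕ) : ℝ :=
  δ₀ * Real.sqrt (2 * (1 - ρ₀) * Real.log n)

/-- `ψ_n(s) = φ(s) · Φ((t_n − √ρ₀ s)/√(1−ρ₀))^n`. -/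
noncomputable def psiN (δ₀ ρ₀ : ℝ) (n : ℕ) (s : ℝ) : ℝ :=
  stdNormalPDF s *
    stdNormalCDF ((tN δ₀ ρ₀ n - Real.sqrt ρ₀ * s) / Real.sqrt (1 - ρ₀)) ^ n

/-!
On `s > 0` the argument of `Φ` is at most `t_n / √(1 - ρ₀) = δ₀ √(2 log n)`, so the integral is at
most `Φ(δ₀ √(2 log n)) ^ n`. The unit interval to the right of `x` already gives
`1 - Φ(x) ≥ φ(|x| + 1)`, hence for `0 ≤ δ₀` this power is at most
`exp (-n φ(δ₀ √(2 log n) + 1))`. Since `n φ(δ₀ √(2 log n) + 1) = n ^ (1 - δ₀² - o(1))` dominates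
every multiple of `log n`, the integral decays faster than every `n ^ p (log n) ^ q`.
-/

open Asymptotics

section StandardNormal

lemma stdNormalPDF_eq_gaussianPDFReal :
    stdNormalPDF = ProbabilityTheory.gaussianPDFReal 0 1 := by
  ext s
  simp [stdNormalPDF, ProbabilityTheory.gaussianPDFReal]

lemma integrable_stdNormalPDF : Integrable stdNormalPDF :=
  stdNormalPDF_eq_gaussianPDFReal ▸ ProbabilityTheory.integrable_gaussianPDFReal 0 1

lemma integral_stdNormalPDF : ∫ s, stdNormalPDF s = 1 :=
  stdNormalPDF_eq_gaussianPDFReal ▸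
    ProbabilityTheory.integral_gaussianPDFReal_eq_one 0 one_ne_zero

lemma stdNormalPDF_nonneg (s : ℝ) : 0 ≤ stdNormalPDF s := by
  unfold stdNormalPDF
  positivity

lemma stdNormalPDF_le_stdNormalPDF_of_abs_le {s t : ℝ} (hst : |s| ≤ |t|) :
    stdNormalPDF t ≤ stdNormalPDF s := by
  have hsq : s ^ 2 ≤ t ^ 2 := sq_le_sq.2 hst
  unfold stdNormalPDF
  gcongr

lemma stdNormalCDF_nonneg (x : ℝ) : 0 ≤ stdNormalCDF x :=
  integral_nonneg stdNormalPDF_nonneg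

lemma monotone_stdNormalCDF : Monotone stdNormalCDF := fun _ _ hxy ↦
  setIntegral_mono_set integrable_stdNormalPDF.integrableOn
    (Eventually.of_forall stdNormalPDF_nonneg) (Set.Iic_subset_Iic.2 hxy).eventuallyLE

lemma stdNormalCDF_add_setIntegral_Ioi (x : ℝ) :
    stdNormalCDF x + ∫ s in Set.Ioi x, stdNormalPDF s = 1 := by
  rw [stdNormalCDF, ← Set.compl_Iic, integral_add_compl measurableSet_Iic integrable_stdNormalPDF,
    integral_stdNormalPDF]

lemma stdNormalPDF_le_setIntegral_Ioi (x : ℝ) :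
    stdNormalPDF (|x| + 1) ≤ ∫ s in Set.Ioi x, stdNormalPDF s := by
  have abs_le_of_mem : ∀ s ∈ Set.Ioc x (x + 1), |s| ≤ |(|x| + 1)| := fun s hs ↦ by
    rw [abs_of_nonneg (by positivity : 0 ≤ |x| + 1), abs_le]
    constructor <;> linarith [neg_abs_le x, le_abs_self x, hs.1, hs.2]
  calc stdNormalPDF (|x| + 1)
      = ∫ _ in Set.Ioc x (x + 1), stdNormalPDF (|x| + 1) := by simp
    _ ≤ ∫ s in Set.Ioc x (x + 1), stdNormalPDF s :=
        setIntegral_mono_on (by simp) integrable_stdNormalPDF.integrableOn measurableSet_Ioc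
          fun s hs ↦ stdNormalPDF_le_stdNormalPDF_of_abs_le (abs_le_of_mem s hs)
    _ ≤ ∫ s in Set.Ioi x, stdNormalPDF s :=
        setIntegral_mono_set integrable_stdNormalPDF.integrableOn
          (Eventually.of_forall stdNormalPDF_nonneg) Set.Ioc_subset_Ioi_self.eventuallyLE

lemma stdNormalCDF_pow_le_exp (x : ℝ) (n : ℕ) :
    stdNormalCDF x ^ n ≤ exp (-(n * stdNormalPDF (|x| + 1))) := by
  have cdf_le : stdNormalCDF x ≤ exp (-stdNormalPDF (|x| + 1)) := by
    linarith [stdNormalCDF_add_setIntegral_Ioi x, stdNormalPDF_le_setIntegral_Ioi x,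
      add_one_le_exp (-stdNormalPDF (|x| + 1))]
  calc stdNormalCDF x ^ n ≤ exp (-stdNormalPDF (|x| + 1)) ^ n :=
        pow_le_pow_left₀ (stdNormalCDF_nonneg x) cdf_le n
    _ = exp (-(n * stdNormalPDF (|x| + 1))) := by rw [← exp_nat_mul, mul_neg]

end StandardNormal

section Asymptotics

lemma eventually_le_sq_sub_sq_affine {δ : ℝ} (hδ : |δ| < 1) (c : ℝ) :
    ∀ᶠ a : ℝ in atTop, a ≤ a ^ 2 / 2 - (δ * a + c) ^ 2 / 2 := by
  have gap_pos : 0 < 1 - δ ^ 2 := sub_pos.2 ((sq_lt_one_iff_abs_lt_one δ).2 hδ)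
  filter_upwards [eventually_ge_atTop 1,
    eventually_ge_atTop ((2 * (δ * c + 1) + c ^ 2) / (1 - δ ^ 2))] with a one_le ha
  rw [div_le_iff₀ gap_pos] at ha
  nlinarith [sq_nonneg c]

lemma sq_isLittleO_exp_mul_stdNormalPDF {δ : ℝ} (hδ : |δ| < 1) (c : ℝ) :
    (fun a : ℝ ↦ a ^ 2) =o[atTop] fun a ↦ exp (a ^ 2 / 2) * stdNormalPDF (δ * a + c) := by
  have exp_mul_pdf (a : ℝ) : exp (a ^ 2 / 2) * stdNormalPDF (δ * a + c) =
      (√(2 * π))⁻¹ * exp (a ^ 2 / 2 - (δ * a + c) ^ 2 / 2) := by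
    rw [stdNormalPDF, sub_eq_add_neg, exp_add, neg_div]
    ring
  have exp_isBigO : exp =O[atTop] fun a ↦ exp (a ^ 2 / 2 - (δ * a + c) ^ 2 / 2) :=
    .of_norm_eventuallyLE <| (eventually_le_sq_sub_sq_affine hδ c).mono fun a ha ↦ by
      simpa only [norm_of_nonneg (exp_pos _).le] using exp_le_exp.2 ha
  simp only [exp_mul_pdf]
  exact (isLittleO_pow_exp_atTop.trans_isBigO exp_isBigO).const_mul_right (by positivity)

lemma log_isLittleO_mul_stdNormalPDF {δ : ℝ} (hδ : |δ| < 1) (c : ℝ) :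
    log =o[atTop] fun x ↦ x * stdNormalPDF (δ * √(2 * log x) + c) := by
  have tendsto_sqrt_log : Tendsto (fun x ↦ √(2 * log x)) atTop atTop :=
    tendsto_sqrt_atTop.comp (tendsto_log_atTop.const_mul_atTop two_pos)
  have sq_sqrt_isLittleO := ((sq_isLittleO_exp_mul_stdNormalPDF hδ c).comp_tendsto
    tendsto_sqrt_log).const_mul_left (1 / 2)
  have half_sq_sqrt_log {x : ℝ} (hx : 1 ≤ x) : √(2 * log x) ^ 2 / 2 = log x := by
    rw [sq_sqrt (mul_nonneg two_pos.le (log_nonneg hx)), mul_div_cancel_left₀ _ two_ne_zero]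
  refine sq_sqrt_isLittleO.congr' ?_ ?_ <;> filter_upwards [eventually_ge_atTop 1] with x hx
  · rw [Function.comp_apply, one_div_mul_eq_div, half_sq_sqrt_log hx]
  · rw [Function.comp_apply, half_sq_sqrt_log hx, exp_log (one_pos.trans_le hx)]

lemma exp_neg_isLittleO_exp_of_isLittleO {ι : Type*} {l : Filter ι} {f g : ι → ℝ}
    (hf : Tendsto f l atTop) (hgf : g =o[l] f) :
    (fun x ↦ exp (-f x)) =o[l] fun x ↦ exp (g x) := by
  rw [isLittleO_exp_comp_exp_comp]
  have add_equiv : (fun x ↦ g x - -f x) ~[l] f := by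
    simpa [IsEquivalent, Function.comp_def, Pi.sub_def] using hgf
  exact add_equiv.symm.tendsto_atTop hf

lemma rpow_mul_log_rpow_eventuallyEq_exp (p q : ℝ) :
    (fun x : ℝ ↦ x ^ p * log x ^ q) =ᶠ[atTop] fun x ↦ exp (log x * p + log (log x) * q) := by
  filter_upwards [eventually_gt_atTop 1] with x hx
  rw [exp_add, ← rpow_def_of_pos (one_pos.trans hx), ← rpow_def_of_pos (log_pos hx)]

lemma log_mul_add_log_log_mul_isBigO_log (p q : ℝ) :
    (fun x ↦ log x * p + log (log x) * q) =O[atTop] log := by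
  have log_log_isLittleO : (fun x ↦ log (log x)) =o[atTop] log :=
    isLittleO_log_id_atTop.comp_tendsto tendsto_log_atTop
  simpa only [mul_comm] using
    ((isBigO_refl log atTop).const_mul_left p).add (log_log_isLittleO.isBigO.const_mul_left q)

lemma exp_neg_mul_stdNormalPDF_isLittleO {δ : ℝ} (hδ : |δ| < 1) (c p q : ℝ) :
    (fun x ↦ exp (-(x * stdNormalPDF (δ * √(2 * log x) + c)))) =o[atTop]
      fun x ↦ x ^ p * log x ^ q := by
  have log_isLittleO := log_isLittleO_mul_stdNormalPDF hδ c
  have tendsto_exponent :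
      Tendsto (fun x ↦ x * stdNormalPDF (δ * √(2 * log x) + c)) atTop atTop := by
    refine (log_isLittleO.isBigO.trans_tendsto_norm_atTop
      (tendsto_norm_atTop_atTop.comp tendsto_log_atTop)).congr' ?_
    filter_upwards [eventually_ge_atTop 0] with x hx
    exact norm_of_nonneg (mul_nonneg hx (stdNormalPDF_nonneg _))
  exact (exp_neg_isLittleO_exp_of_isLittleO tendsto_exponent
    ((log_mul_add_log_log_mul_isBigO_log p q).trans_isLittleO log_isLittleO)).trans_eventuallyEq
      (rpow_mul_log_rpow_eventuallyEq_exp p q).symm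

lemma stdNormalCDF_pow_isLittleO {δ : ℝ} (hδ : δ < 1) (p q : ℝ) :
    (fun n : ℕ ↦ stdNormalCDF (δ * √(2 * log n)) ^ n) =o[atTop]
      fun n ↦ (n : ℝ) ^ p * log n ^ q := by
  have hδ_max : |max δ 0| < 1 := by
    rw [abs_of_nonneg (le_max_right δ 0)]
    exact max_lt hδ one_pos
  refine IsBigO.trans_isLittleO (.of_norm_le fun n ↦ ?_)
    ((exp_neg_mul_stdNormalPDF_isLittleO hδ_max 1 p q).comp_tendsto tendsto_natCast_atTop_atTop)
  have cdf_le : stdNormalCDF (δ * √(2 * log n)) ≤ stdNormalCDF (max δ 0 * √(2 * log n)) :=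
    monotone_stdNormalCDF (by gcongr; exact le_max_left δ 0)
  calc ‖stdNormalCDF (δ * √(2 * log n)) ^ n‖
      = stdNormalCDF (δ * √(2 * log n)) ^ n :=
        norm_of_nonneg (pow_nonneg (stdNormalCDF_nonneg _) n)
    _ ≤ stdNormalCDF (max δ 0 * √(2 * log n)) ^ n :=
        pow_le_pow_left₀ (stdNormalCDF_nonneg _) cdf_le n
    _ ≤ exp (-(n * stdNormalPDF (|max δ 0 * √(2 * log n)| + 1))) := stdNormalCDF_pow_le_exp _ n
    _ = exp (-(n * stdNormalPDF (max δ 0 * √(2 * log n) + 1))) := by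
        rw [abs_of_nonneg (by positivity)]

end Asymptotics

section Psi

variable {δ ρ : ℝ}

lemma tN_div_sqrt_one_sub (hρ : ρ < 1) (n : ℕ) :
    tN δ ρ n / √(1 - ρ) = δ * √(2 * log n) := by
  have sqrt_pos : 0 < √(1 - ρ) := Real.sqrt_pos.2 (sub_pos.2 hρ)
  have sqrt_mul_comm : √(2 * (1 - ρ) * log n) = √(1 - ρ) * √(2 * log n) := by
    rw [← sqrt_mul (sub_pos.2 hρ).le]
    ring_nf
  rw [tN, sqrt_mul_comm]
  field_simp

lemma psiN_nonneg (n : ℕ) (s : ℝ) : 0 ≤ psiN δ ρ n s :=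
  mul_nonneg (stdNormalPDF_nonneg s) (pow_nonneg (stdNormalCDF_nonneg _) n)

lemma psiN_le_of_nonneg (hρ : ρ < 1) (n : ℕ) {s : ℝ} (hs : 0 ≤ s) :
    psiN δ ρ n s ≤ stdNormalPDF s * stdNormalCDF (δ * √(2 * log n)) ^ n := by
  have arg_le : (tN δ ρ n - √ρ * s) / √(1 - ρ) ≤ δ * √(2 * log n) := by
    rw [← tN_div_sqrt_one_sub hρ]
    gcongr
    exact sub_le_self _ (by positivity)
  exact mul_le_mul_of_nonneg_left
    (pow_le_pow_left₀ (stdNormalCDF_nonneg _) (monotone_stdNormalCDF arg_le) n)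
    (stdNormalPDF_nonneg s)

lemma integral_psiN_Ioi_le (hρ : ρ < 1) (n : ℕ) :
    ∫ s in Set.Ioi (0 : ℝ), psiN δ ρ n s ≤ stdNormalCDF (δ * √(2 * log n)) ^ n := by
  have integral_pdf_le : ∫ s in Set.Ioi (0 : ℝ), stdNormalPDF s ≤ 1 :=
    integral_stdNormalPDF ▸ setIntegral_le_integral integrable_stdNormalPDF
      (Eventually.of_forall stdNormalPDF_nonneg)
  calc ∫ s in Set.Ioi (0 : ℝ), psiN δ ρ n s
      ≤ ∫ s in Set.Ioi (0 : ℝ), stdNormalPDF s * stdNormalCDF (δ * √(2 * log n)) ^ n :=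
        integral_mono_of_nonneg (Eventually.of_forall (psiN_nonneg n))
          (integrable_stdNormalPDF.mul_const _).integrableOn
          ((ae_restrict_mem measurableSet_Ioi).mono fun s hs ↦
            psiN_le_of_nonneg hρ n (le_of_lt hs))
    _ = (∫ s in Set.Ioi (0 : ℝ), stdNormalPDF s) * stdNormalCDF (δ * √(2 * log n)) ^ n :=
        integral_mul_const _ _
    _ ≤ stdNormalCDF (δ * √(2 * log n)) ^ n :=
        mul_le_of_le_one_left (pow_nonneg (stdNormalCDF_nonneg _) n) integral_pdf_le

theorem psi_integral_right_half_line_upper_bound_general (hδ : δ < 1)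
    (hρ : ρ ∈ Set.Ico (0 : ℝ) 1) {C : ℝ} (hC : 0 < C) (p q : ℝ) :
    ∀ᶠ n : ℕ in atTop,
      ∫ s in Set.Ioi (0 : ℝ), psiN δ ρ n s ≤ C * (n : ℝ) ^ p * log n ^ q := by
  filter_upwards [(stdNormalCDF_pow_isLittleO hδ p q).bound hC] with n hn
  calc ∫ s in Set.Ioi (0 : ℝ), psiN δ ρ n s
      ≤ stdNormalCDF (δ * √(2 * log n)) ^ n := integral_psiN_Ioi_le hρ.2 n
    _ ≤ ‖stdNormalCDF (δ * √(2 * log n)) ^ n‖ := le_norm_self _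
    _ ≤ C * ‖(n : ℝ) ^ p * log n ^ q‖ := hn
    _ = C * (n : ℝ) ^ p * log n ^ q := by rw [norm_of_nonneg (by positivity), mul_assoc]

end Psi

theorem psi_integral_right_half_line_upper_bound (δ₀ ρ₀ : ℝ)
    (hδ : δ₀ ∈ Set.Ioo (0 : ℝ) 1) (hρ : ρ₀ ∈ Set.Ioo (0 : ℝ) 1) :
    ∃ C : ℝ, 0 < C ∧
      ∀ᶠ n : ℕ in atTop,
        ∫ s in Set.Ioi (0 : ℝ), psiN δ₀ ρ₀ n s
          ≤ C * (n : ℝ) ^ (-((1 - ρ₀) * (1 - δ₀) ^ 2 / ρ₀))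
              * Real.log n ^ (((1 - ρ₀) * (1 - δ₀) / ρ₀ - 1) / 2) :=
  ⟨1, one_pos, psi_integral_right_half_line_upper_bound_general hδ.2 ⟨hρ.1.le, hρ.2⟩ one_pos _ _⟩
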